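/- Let k be a number field and S a finite set of places containing the archimedean places, a, b, c ∈ k^*. Then the set of pairs (u, v) ∈ O_{k,S}^* × O_{k,S}^* satisfying au + bv = c is finite. -/

import Mathlib

open IsDedekindDomain NumberField

/-!
The equation is reduced to `x + y = 1` in the units of a ring of `S`-integers, after enlarging `S`.
Let `Λ s` be the vector of logarithms of all relevant absolute values of a solution `s = (x, y)`,
and `h` the height of such a vector; by the product formula `h` controls the norm of `Λ s`.

Padé approximation to powers of `1 - z` (the hypergeometric method of Thue and Siegel) gives, for
every `N`, integral `A`, `B`, `C` of size about `H(s) ^ N` with `A x ^ (2N) + B y ^ (2N) = C`. If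
`s'` is a second solution, `(x ^ (2N), y ^ (2N))` also lies on the line with coefficients
`s' / s ^ (2N)`. The determinant of the two equations can be chosen nonzero, so the product formula
bounds it from below, and Cramer's rule yields the gap inequality
`N h(Λ s) ≤ h(Λ s' - 2N Λ s) + O(N)`.

If two large solutions had nearly parallel vectors `Λ s` and `Λ s'`, then for `2N` close to
`h(Λ s') / h(Λ s)` the right-hand side would be too small, unless this quotient is bounded. As
directions range over a compact set, heights of solutions are bounded, and Northcott's theorem
applies.
-/

namespace SUnitEquation

section Pade

open Finset intervalIntegral
open scoped Nat

variable {R S : Type*} [CommRing R] [CommRing S]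

lemma integral_pow_mul_one_sub_pow (a b : ℕ) :
    ∫ t in (0 : ℝ)..1, t ^ a * (1 - t) ^ b = (a ! * b ! : ℝ) / (a + b + 1)! := by
  have h_beta : ((∫ t in (0 : ℝ)..1, t ^ a * (1 - t) ^ b : ℝ) : ℂ) =
      Complex.betaIntegral (a + 1) (b + 1) := by
    rw [Complex.betaIntegral, ← integral_ofReal]
    congr with t
    simp [Complex.cpow_natCast]
  rw [Complex.betaIntegral_eq_Gamma_mul_div _ _
      (by simpa using Nat.cast_add_one_pos a) (by simpa using Nat.cast_add_one_pos b),
    show (a + 1 + (b + 1) : ℂ) = (a + b + 1 : ℕ) + 1 by push_cast; ring,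
    Complex.Gamma_nat_eq_factorial, Complex.Gamma_nat_eq_factorial,
    Complex.Gamma_nat_eq_factorial] at h_beta
  apply Complex.ofReal_injective
  rw [h_beta]
  push_cast
  rfl

/-- The binary form `(a + b + c + 1)! / (a! b! c!) * ∫₀¹ sᵃ (1 - s)ᵇ (y - w s)ᶜ ds` of degree `c`
in `y` and `w`. It is defined by its coefficients, which are integers, so that it makes sense over
every commutative ring; the Padé approximants below are specializations of it. -/
def padeForm (a b c : ℕ) (y w : R) : R :=
  ∑ i ∈ range (c + 1),
    (-1) ^ i * ((a + i).choose i * (a + b + c + 1).choose (c - i)) * (w ^ i * y ^ (c - i))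

@[simp]
lemma map_padeForm (f : R →+* S) (a b c : ℕ) (y w : R) :
    f (padeForm a b c y w) = padeForm a b c (f y) (f w) := by
  simp [padeForm]

lemma choose_mul_choose_eq {a b c i : ℕ} (hi : i ≤ c) :
    ((a + i).choose i * (a + b + c + 1).choose (c - i) : ℝ) =
      (a + b + c + 1)! / (a ! * b ! * c !) *
        (c.choose i * (((a + i)! * b ! : ℝ) / (a + i + b + 1)!)) := by
  obtain ⟨j, rfl⟩ := Nat.exists_eq_add_of_le hi
  have factorial_ne_zero (n : ℕ) : (n ! : ℝ) ≠ 0 := by positivity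
  rw [Nat.add_sub_cancel_left, show a + b + (i + j) + 1 = j + (a + i + b + 1) by ring,
    Nat.add_comm a i, Nat.cast_add_choose, Nat.cast_add_choose, Nat.cast_add_choose]
  field_simp [factorial_ne_zero]

lemma padeForm_eq_integral (a b c : ℕ) (y w : ℝ) :
    padeForm a b c y w = (a + b + c + 1)! / (a ! * b ! * c !) *
      ∫ s in (0 : ℝ)..1, s ^ a * (1 - s) ^ b * (y - w * s) ^ c := by
  have h_binomial (s : ℝ) : s ^ a * (1 - s) ^ b * (y - w * s) ^ c =
      ∑ i ∈ range (c + 1), ((-1) ^ i * c.choose i * (w ^ i * y ^ (c - i))) *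
        (s ^ (a + i) * (1 - s) ^ b) := by
    rw [show y - w * s = -(w * s) + y by ring, add_pow, mul_sum]
    refine sum_congr rfl fun i _ => ?_
    rw [neg_pow, mul_pow, pow_add]
    ring
  simp_rw [h_binomial]
  rw [integral_finsetSum fun i _ => Continuous.intervalIntegrable (by fun_prop) 0 1, padeForm,
    mul_sum]
  refine sum_congr rfl fun i hi => ?_
  rw [integral_const_mul, integral_pow_mul_one_sub_pow,
    choose_mul_choose_eq (mem_range_succ_iff.mp hi)]
  ring

lemma integral_zero_left_eq_mul (a b c : ℕ) (z : ℝ) :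
    ∫ s in 0..z, s ^ a * (1 - s) ^ b * (z - s) ^ c =
      z ^ (a + c + 1) * ∫ s in (0 : ℝ)..1, s ^ a * (1 - s) ^ c * (1 - z * s) ^ b := by
  have h_subst := mul_integral_comp_mul_left (a := 0) (b := 1)
    (f := fun s => s ^ a * (1 - s) ^ b * (z - s) ^ c) z
  rw [mul_zero, mul_one] at h_subst
  rw [← h_subst, ← integral_const_mul, ← integral_const_mul]
  congr with s
  rw [show z - z * s = z * (1 - s) by ring, mul_pow, mul_pow]
  ring

lemma padeForm_identity_real (a b c : ℕ) (z : ℝ) :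
    z ^ (a + c + 1) * padeForm a c b 1 z +
        (-1) ^ c * (1 - z) ^ (b + c + 1) * padeForm b c a 1 (1 - z) = padeForm a b c z 1 := by
  have h_right : ∫ s in z..1, s ^ a * (1 - s) ^ b * (z - s) ^ c =
      (-1) ^ c * ∫ s in 0..(1 - z), s ^ b * (1 - s) ^ a * ((1 - z) - s) ^ c := by
    have h_sign : (-1 : ℝ) ^ c * (-1) ^ c = 1 := by simp [← mul_pow]
    have h_reflect := integral_comp_sub_left (a := z) (b := 1)
      (fun s => s ^ b * (1 - s) ^ a * ((1 - z) - s) ^ c) 1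
    rw [sub_self] at h_reflect
    rw [← h_reflect, ← integral_const_mul]
    congr with s
    rw [show 1 - z - (1 - s) = -1 * (z - s) by ring, mul_pow, sub_sub_cancel, ← mul_assoc]
    linear_combination (-(s ^ a * (1 - s) ^ b * (z - s) ^ c)) * h_sign
  have h_split := integral_add_adjacent_intervals (μ := MeasureTheory.volume)
    (Continuous.intervalIntegrable (u := fun s : ℝ => s ^ a * (1 - s) ^ b * (z - s) ^ c)
      (by fun_prop) 0 z)
    (Continuous.intervalIntegrable (by fun_prop) z 1)
  rw [h_right, integral_zero_left_eq_mul, integral_zero_left_eq_mul] at h_split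
  simp only [padeForm_eq_integral, one_mul]
  rw [← h_split, add_right_comm a c b, show b + c + a + 1 = a + b + c + 1 by ring]
  ring

open Polynomial in
lemma padeForm_identity (a b c : ℕ) {x y : R} (hxy : x + y = 1) :
    x ^ (a + c + 1) * padeForm a c b 1 x + (-1) ^ c * y ^ (b + c + 1) * padeForm b c a 1 y =
      padeForm a b c x 1 := by
  have h_poly : (X : ℤ[X]) ^ (a + c + 1) * padeForm a c b 1 X +
      (-1) ^ c * (1 - X) ^ (b + c + 1) * padeForm b c a 1 (1 - X) = padeForm a b c X 1 := by
    refine map_injective (Int.castRingHom ℝ) Int.cast_injective (Polynomial.funext fun r => ?_)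
    rw [eval_map, eval_map, ← coe_eval₂RingHom]
    simp only [map_add, map_mul, map_sub, map_pow, map_one, map_neg, map_padeForm]
    simpa using padeForm_identity_real a b c r
  obtain rfl : y = 1 - x := eq_sub_of_add_eq' hxy
  have h_eval := congrArg (eval₂RingHom (Int.castRingHom R) x) h_poly
  simp only [map_add, map_mul, map_sub, map_pow, map_one, map_neg, map_padeForm] at h_eval
  simpa using h_eval

lemma padeForm_one_zero (a b c : ℕ) :
    padeForm a b c (1 : R) 0 = (a + b + c + 1).choose c := by
  rw [padeForm, sum_range_succ', sum_eq_zero fun i _ => by simp]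
  simp

lemma padeForm_zero_one (a b c : ℕ) :
    padeForm a b c (0 : R) 1 = (-1) ^ c * (a + c).choose c := by
  rw [padeForm, sum_range_succ, sum_eq_zero fun i hi => ?_]
  · simp
  · simp [Nat.sub_ne_zero_of_lt (mem_range.mp hi)]

open Polynomial in
lemma natDegree_padeForm_le (a b c : ℕ) {y w : R[X]}
    (hy : y.natDegree ≤ 1) (hw : w.natDegree ≤ 1) : (padeForm a b c y w).natDegree ≤ c := by
  refine natDegree_sum_le_of_forall_le _ _ fun i hi => ?_
  have h_monomial : (w ^ i * y ^ (c - i)).natDegree ≤ i * 1 + (c - i) * 1 :=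
    natDegree_mul_le_of_le (natDegree_pow_le_of_le i hw) (natDegree_pow_le_of_le _ hy)
  rw [← add_mul, Nat.add_sub_cancel' (mem_range_succ_iff.mp hi), mul_one] at h_monomial
  have h_coeff : ((-1) ^ i * ((a + i).choose i * (a + b + c + 1).choose (c - i)) : R[X]) =
      C ((-1) ^ i * ((a + i).choose i * (a + b + c + 1).choose (c - i)) : R) := by
    simp
  rw [h_coeff]
  exact (natDegree_C_mul_le _ _).trans h_monomial

/-- The coefficient of `x ^ (m + c + 1)`, and up to sign that of `(1 - x) ^ (m + c + 1)`, in the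
symmetric Padé relation `padeCoeff_relation`. -/
def padeCoeff (m c : ℕ) (z : R) : R :=
  padeForm m c m 1 z

/-- The right-hand side of the symmetric Padé relation `padeCoeff_relation`. -/
def padeValue (m c : ℕ) (z : R) : R :=
  padeForm m m c z 1

lemma padeCoeff_relation (m c : ℕ) {x y : R} (hxy : x + y = 1) :
    padeCoeff m c x * x ^ (m + c + 1) + (-1) ^ c * padeCoeff m c y * y ^ (m + c + 1) =
      padeValue m c x := by
  rw [padeValue, ← padeForm_identity m m c hxy, padeCoeff, padeCoeff]
  ring

@[simp]
lemma map_padeCoeff (f : R →+* S) (m c : ℕ) (z : R) :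
    f (padeCoeff m c z) = padeCoeff m c (f z) := by
  simp [padeCoeff]

/-- The determinant of the coefficients on the left-hand sides of the relations
`padeCoeff_relation (n + 1) n` and `padeCoeff_relation n (n + 1)`. -/
def padeDet (n : ℕ) (x y : R) : R :=
  padeCoeff (n + 1) n x * ((-1) ^ (n + 1) * padeCoeff n (n + 1) y) -
    padeCoeff n (n + 1) x * ((-1) ^ n * padeCoeff (n + 1) n y)

@[simp]
lemma map_padeDet (f : R →+* S) (n : ℕ) (x y : R) :
    f (padeDet n x y) = padeDet n (f x) (f y) := by
  simp [padeDet]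

lemma padeDet_mul_pow (n : ℕ) {x y : R} (hxy : x + y = 1) :
    padeDet n x y * y ^ (2 * n + 2) =
      padeCoeff (n + 1) n x * padeValue n (n + 1) x -
        padeCoeff n (n + 1) x * padeValue (n + 1) n x := by
  rw [← padeCoeff_relation n (n + 1) hxy, ← padeCoeff_relation (n + 1) n hxy, padeDet]
  ring

lemma padeDet_zero_one_ne_zero (n : ℕ) : padeDet n (0 : ℤ) 1 ≠ 0 := by
  have h_det := padeDet_mul_pow n (zero_add (1 : ℤ))
  simp only [one_pow, mul_one, padeCoeff, padeValue, padeForm_one_zero, padeForm_zero_one] at h_det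
  have choose_pos {m i : ℕ} (hi : i ≤ m) : (0 : ℤ) < m.choose i :=
    mod_cast Nat.choose_pos hi
  have h_first := mul_pos (choose_pos (show n + 1 ≤ n + 1 + n + (n + 1) + 1 by lia))
    (choose_pos (show n + 1 ≤ n + (n + 1) by lia))
  have h_second := mul_pos (choose_pos (show n ≤ n + (n + 1) + n + 1 by lia))
    (choose_pos (show n ≤ n + 1 + n by lia))
  rcases neg_one_pow_eq_or ℤ n with h_sign | h_sign <;> rw [h_det, pow_succ, h_sign] <;> nlinarith

open Polynomial in
lemma natDegree_padeDet (n : ℕ) : (padeDet n (X : ℤ[X]) (1 - X)).natDegree = 0 := by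
  have natDegree_one_sub_X : (1 - X : ℤ[X]).natDegree = 1 := by
    rw [← natDegree_neg, neg_sub, ← C_1, natDegree_X_sub_C]
  have natDegree_padeCoeff_le (m c : ℕ) : (padeCoeff m c (X : ℤ[X])).natDegree ≤ m :=
    natDegree_padeForm_le _ _ _ (by simp) (by simp)
  have natDegree_padeValue_le (m c : ℕ) : (padeValue m c (X : ℤ[X])).natDegree ≤ c :=
    natDegree_padeForm_le _ _ _ (by simp) (by simp)
  have h_le : (padeDet n (X : ℤ[X]) (1 - X) * (1 - X) ^ (2 * n + 2)).natDegree ≤ 2 * n + 2 := by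
    rw [padeDet_mul_pow n (add_sub_cancel X 1)]
    refine (natDegree_sub_le_of_le (natDegree_mul_le_of_le (natDegree_padeCoeff_le _ _)
      (natDegree_padeValue_le _ _)) (natDegree_mul_le_of_le (natDegree_padeCoeff_le _ _)
      (natDegree_padeValue_le _ _))).trans (max_le ?_ ?_) <;> lia
  by_cases h_zero : padeDet n (X : ℤ[X]) (1 - X) = 0
  · rw [h_zero, natDegree_zero]
  · have one_sub_X_ne_zero : (1 - X : ℤ[X]) ≠ 0 :=
      ne_zero_of_natDegree_gt (n := 0) (by simp [natDegree_one_sub_X])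
    rw [natDegree_mul h_zero (pow_ne_zero _ one_sub_X_ne_zero), natDegree_pow,
      natDegree_one_sub_X] at h_le
    lia

/-- Over `ℤ[X]` the determinant is a constant, by comparing degrees in `padeDet_mul_pow`; its value
at `X = 0` shows that this constant is not zero. -/
lemma padeDet_ne_zero [CharZero R] (n : ℕ) {x y : R} (hxy : x + y = 1) :
    padeDet n x y ≠ 0 := by
  have h_const := Polynomial.eq_C_of_natDegree_eq_zero (natDegree_padeDet n)
  have h_eval := congrArg (Polynomial.eval₂RingHom (Int.castRingHom R) x) h_const
  have h_coeff := congrArg (Polynomial.evalRingHom (0 : ℤ)) h_const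
  simp only [map_padeDet, map_sub, map_one, Polynomial.coe_evalRingHom, Polynomial.coe_eval₂RingHom,
    Polynomial.eval_X, Polynomial.eval₂_X, Polynomial.eval_C, Polynomial.eval₂_C, sub_zero]
    at h_eval h_coeff
  rw [← eq_sub_of_add_eq' hxy, ← h_coeff] at h_eval
  rw [h_eval]
  simpa using padeDet_zero_one_ne_zero n

end Pade

section AbsoluteValue

open Finset

variable {R : Type*} [CommRing R]

lemma choose_mul_choose_le_two_pow {a b c i : ℕ} (hi : i ≤ c) :
    (a + i).choose i * (a + b + c + 1).choose (c - i) ≤ 2 ^ (2 * a + b + 2 * c + 1) :=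
  calc (a + i).choose i * (a + b + c + 1).choose (c - i)
      ≤ 2 ^ (a + i) * 2 ^ (a + b + c + 1) :=
        Nat.mul_le_mul (Nat.choose_le_two_pow _ _) (Nat.choose_le_two_pow _ _)
    _ = 2 ^ (2 * a + b + c + i + 1) := by rw [← pow_add]; congr 1; ring
    _ ≤ 2 ^ (2 * a + b + 2 * c + 1) := Nat.pow_le_pow_right two_pos (by lia)

lemma abv_neg_one_pow_mul [Nontrivial R] (v : AbsoluteValue R ℝ) (n : ℕ) (r : R) :
    v ((-1) ^ n * r) = v r := by
  rw [v.map_mul, v.map_pow, v.map_neg, v.map_one, one_pow, one_mul]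

lemma abv_padeForm_le [Nontrivial R] (v : AbsoluteValue R ℝ) (a b c : ℕ) {y w : R} {μ : ℝ}
    (hy : v y ≤ μ) (hw : v w ≤ μ) :
    v (padeForm a b c y w) ≤ 2 ^ (2 * a + b + 3 * c + 1) * μ ^ c := by
  have h_coeff {i : ℕ} (hi : i ≤ c) :
      v ((-1) ^ i * ((a + i).choose i * (a + b + c + 1).choose (c - i))) ≤
        2 ^ (2 * a + b + 2 * c + 1) := by
    rw [abv_neg_one_pow_mul, ← Nat.cast_mul]
    exact (v.apply_nat_le_self _).trans (mod_cast choose_mul_choose_le_two_pow hi)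
  have h_term (i : ℕ) (hi : i ∈ range (c + 1)) :
      v ((-1) ^ i * ((a + i).choose i * (a + b + c + 1).choose (c - i)) * (w ^ i * y ^ (c - i))) ≤
        2 ^ (2 * a + b + 2 * c + 1) * μ ^ c := by
    have hi := mem_range_succ_iff.mp hi
    rw [map_mul, map_mul v (w ^ i), v.map_pow w, v.map_pow y, ← Nat.add_sub_cancel' hi, pow_add μ,
      Nat.add_sub_cancel' hi]
    have := (v.nonneg y).trans hy
    gcongr
    exact h_coeff hi
  have h_count : ((c + 1 : ℕ) : ℝ) ≤ 2 ^ c := mod_cast Nat.lt_two_pow_self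
  calc v (padeForm a b c y w)
      ≤ ∑ i ∈ range (c + 1), 2 ^ (2 * a + b + 2 * c + 1) * μ ^ c :=
        (v.sum_le _ _).trans (sum_le_sum h_term)
    _ = (c + 1 : ℕ) * (2 ^ (2 * a + b + 2 * c + 1) * μ ^ c) := by
        rw [sum_const, card_range, nsmul_eq_mul]
    _ ≤ 2 ^ c * (2 ^ (2 * a + b + 2 * c + 1) * μ ^ c) := by
        have := (v.nonneg y).trans hy
        gcongr
    _ = 2 ^ (2 * a + b + 3 * c + 1) * μ ^ c := by ring

/-- The contribution `max (v x) (v y) 1` of the absolute value `v` to the height of the projective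
point `(x : y : 1)`. -/
def localHeight (v : AbsoluteValue R ℝ) (x y : R) : ℝ :=
  max (max (v x) (v y)) 1

lemma one_le_localHeight (v : AbsoluteValue R ℝ) (x y : R) : 1 ≤ localHeight v x y :=
  le_max_right _ _

lemma abv_left_le_localHeight (v : AbsoluteValue R ℝ) (x y : R) : v x ≤ localHeight v x y :=
  (le_max_left _ _).trans (le_max_left _ _)

lemma abv_right_le_localHeight (v : AbsoluteValue R ℝ) (x y : R) : v y ≤ localHeight v x y :=
  (le_max_right _ _).trans (le_max_left _ _)

lemma localHeight_pow [Nontrivial R] (v : AbsoluteValue R ℝ) (x y : R) (n : ℕ) :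
    localHeight v (x ^ n) (y ^ n) = localHeight v x y ^ n := by
  have h_mono : MonotoneOn (fun t : ℝ => t ^ n) (Set.Ici 0) := fun _ hs _ _ hst =>
    pow_le_pow_left₀ hs hst n
  rw [localHeight, localHeight,
    h_mono.map_max (le_max_of_le_left (v.nonneg x)) (Set.mem_Ici.mpr zero_le_one),
    h_mono.map_max (v.nonneg x) (v.nonneg y), v.map_pow, v.map_pow, one_pow]

/-- Coefficients `A`, `B` and `C` of an approximate linear relation between `x ^ (2 * N)`,
`y ^ (2 * N)` and `1` whose size is about that of `N`-th powers only, whatever the absolute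
value. -/
structure IsPadeTriple (N : ℕ) (x y A B C : R) : Prop where
  relation : A * x ^ (2 * N) + B * y ^ (2 * N) = C
  left_le (v : AbsoluteValue R ℝ) : v A ≤ (64 * localHeight v x y) ^ N
  right_le (v : AbsoluteValue R ℝ) : v B ≤ (64 * localHeight v x y) ^ N
  value_le (v : AbsoluteValue R ℝ) : v C ≤ (64 * localHeight v x y) ^ N

lemma abv_padeForm_le_localHeight [Nontrivial R] (v : AbsoluteValue R ℝ) {a b c N : ℕ}
    {x y z w : R} (hz : v z ≤ localHeight v x y) (hw : v w ≤ localHeight v x y) (hc : c ≤ N)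
    (hN : 2 * a + b + 3 * c + 1 ≤ 6 * N) :
    v (padeForm a b c z w) ≤ (64 * localHeight v x y) ^ N :=
  calc v (padeForm a b c z w)
      ≤ 2 ^ (2 * a + b + 3 * c + 1) * localHeight v x y ^ c := abv_padeForm_le v a b c hz hw
    _ ≤ 2 ^ (6 * N) * localHeight v x y ^ N := by
        have := one_le_localHeight v x y
        gcongr
        norm_num
    _ = (64 * localHeight v x y) ^ N := by rw [mul_pow, pow_mul]; norm_num

lemma isPadeTriple_padeCoeff [Nontrivial R] {m c N : ℕ} {x y : R} (hxy : x + y = 1) (hm : m ≤ N)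
    (hc : c ≤ N) (hmc : m + c + 1 = 2 * N) :
    IsPadeTriple N x y (padeCoeff m c x) ((-1) ^ c * padeCoeff m c y) (padeValue m c x) where
  relation := hmc ▸ padeCoeff_relation m c hxy
  left_le v := abv_padeForm_le_localHeight v (v.map_one.trans_le (one_le_localHeight v x y))
    (abv_left_le_localHeight v x y) hm (by lia)
  right_le v := by
    rw [abv_neg_one_pow_mul]
    exact abv_padeForm_le_localHeight v (v.map_one.trans_le (one_le_localHeight v x y))
      (abv_right_le_localHeight v x y) hm (by lia)
  value_le v := abv_padeForm_le_localHeight v (abv_left_le_localHeight v x y)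
    (v.map_one.trans_le (one_le_localHeight v x y)) hc (by lia)

lemma exists_isPadeTriple_mul_sub_mul_ne_zero [CharZero R] {N : ℕ} (hN : 1 ≤ N) {x y : R}
    (hxy : x + y = 1) (ξ : Rˣ) (η : R) :
    ∃ A B C, IsPadeTriple N x y A B C ∧ ξ * B - η * A ≠ 0 := by
  obtain ⟨n, rfl⟩ := Nat.exists_eq_add_of_le' hN
  by_contra! h_all
  have h_first := h_all _ _ _
    (isPadeTriple_padeCoeff hxy le_rfl n.le_succ (by lia) : IsPadeTriple (n + 1) x y _ _ _)
  have h_second := h_all _ _ _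
    (isPadeTriple_padeCoeff hxy n.le_succ le_rfl (by lia) : IsPadeTriple (n + 1) x y _ _ _)
  refine padeDet_ne_zero n hxy (ξ.isUnit.mul_right_eq_zero.mp ?_)
  rw [padeDet]
  linear_combination padeCoeff (n + 1) n x * h_second - padeCoeff n (n + 1) x * h_first

lemma abv_mul_localHeight_le [Nontrivial R] (v : AbsoluteValue R ℝ) {A B C X Y ξ η : R} {Q : ℝ}
    (h_relation : A * X + B * Y = C) (h_line : ξ * X + η * Y = 1) (hA : v A ≤ Q) (hB : v B ≤ Q)
    (hC : v C ≤ Q) :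
    v (ξ * B - η * A) * localHeight v X Y ≤ 2 * localHeight v ξ η * Q := by
  have h_one := one_le_localHeight v ξ η
  have hξ := abv_left_le_localHeight v ξ η
  have hη := abv_right_le_localHeight v ξ η
  have hQ : 0 ≤ Q := (v.nonneg A).trans hA
  have mul_le {r s : R} (hr : v r ≤ localHeight v ξ η) (hs : v s ≤ Q) :
      v (r * s) ≤ localHeight v ξ η * Q := by
    rw [map_mul]
    gcongr
  have sub_le {r s : R} (hr : v r ≤ localHeight v ξ η * Q) (hs : v s ≤ localHeight v ξ η * Q) :
      v (r - s) ≤ 2 * localHeight v ξ η * Q :=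
    (v.sub_le_add r s).trans (by linarith)
  have le_mul {r : R} (hr : v r ≤ Q) : v r ≤ localHeight v ξ η * Q :=
    hr.trans (le_mul_of_one_le_left hQ h_one)
  have h_X : (ξ * B - η * A) * X = B - η * C := by
    linear_combination B * h_line - η * h_relation
  have h_Y : (ξ * B - η * A) * Y = ξ * C - A := by
    linear_combination ξ * h_relation - A * h_line
  rw [localHeight, mul_max_of_nonneg _ _ (v.nonneg _), mul_max_of_nonneg _ _ (v.nonneg _),
    mul_one, ← map_mul, ← map_mul, h_X, h_Y]
  exact max_le (max_le (sub_le (le_mul hB) (mul_le hη hC)) (sub_le (mul_le hξ hC) (le_mul hA)))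
    (sub_le (mul_le hξ hB) (mul_le hη hA))

lemma IsPadeTriple.abv_mul_localHeight_pow_le [Nontrivial R] {N : ℕ} {x y A B C ξ η : R}
    (h : IsPadeTriple N x y A B C) (hN : 1 ≤ N) (v : AbsoluteValue R ℝ)
    (h_line : ξ * x ^ (2 * N) + η * y ^ (2 * N) = 1) :
    v (ξ * B - η * A) * localHeight v x y ^ N ≤ 128 ^ N * localHeight v ξ η := by
  have h_pos : 0 < localHeight v x y ^ N :=
    pow_pos (zero_lt_one.trans_le (one_le_localHeight v x y)) N
  have h_cramer := abv_mul_localHeight_le v h.relation h_line (h.left_le v) (h.right_le v)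
    (h.value_le v)
  rw [localHeight_pow, two_mul N, pow_add, mul_pow, ← mul_assoc, ← mul_assoc] at h_cramer
  have h_two : (2 : ℝ) ≤ 2 ^ N := le_self_pow₀ one_le_two (by lia)
  have := one_le_localHeight v ξ η
  calc v (ξ * B - η * A) * localHeight v x y ^ N
      ≤ 2 * localHeight v ξ η * 64 ^ N := le_of_mul_le_mul_right h_cramer h_pos
    _ ≤ 2 ^ N * localHeight v ξ η * 64 ^ N := by gcongr
    _ = 128 ^ N * localHeight v ξ η := by
        rw [mul_right_comm, ← mul_pow]
        norm_num

end AbsoluteValue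

section Height

open Finset Real

variable {R ι : Type*} [CommRing R]

/-- The logarithms of all the given absolute values of the two members of a pair of units. -/
noncomputable def logAbs (v : ι → AbsoluteValue R ℝ) (s : Rˣ × Rˣ) (i : ι) : ℝ × ℝ :=
  (log (v i s.1), log (v i s.2))

lemma log_abv_div_pow [Nontrivial R] (v : AbsoluteValue R ℝ) (x y : Rˣ) (n : ℕ) :
    log (v ((x / y ^ n : Rˣ) : R)) = log (v x) - n * log (v y) := by
  have h_pos (z : Rˣ) : v z ≠ 0 := v.ne_zero z.ne_zero
  have h_mul : v ((x / y ^ n : Rˣ) : R) * v y ^ n = v x := by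
    rw [← v.map_pow, ← v.map_mul, ← Units.val_pow_eq_pow_val, ← Units.val_mul, div_mul_cancel]
  rw [← h_mul, log_mul (h_pos _) (pow_ne_zero n (h_pos y)), log_pow, add_sub_cancel_right]

lemma logAbs_div_pow [Nontrivial R] (v : ι → AbsoluteValue R ℝ) (s s' : Rˣ × Rˣ) (n : ℕ) :
    logAbs v (s' / s ^ n) = logAbs v s' - (n : ℝ) • logAbs v s :=
  funext fun i => Prod.ext (log_abv_div_pow (v i) s'.1 s.1 n) (log_abv_div_pow (v i) s'.2 s.2 n)

variable [Fintype ι]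

/-- The logarithmic height of a family of pairs of logarithms, the third coordinate of the
projective point being normalized to `1`; see `height_logAbs`. -/
def height (P : ι → ℝ × ℝ) : ℝ :=
  ∑ i, max (max (P i).1 (P i).2) 0

lemma height_add_le (P Q : ι → ℝ × ℝ) : height (P + Q) ≤ height P + height Q := by
  rw [height, height, height, ← sum_add_distrib]
  refine sum_le_sum fun i _ => (max_le_max_right 0 max_add_add_le_max_add_max).trans ?_
  simpa only [add_zero] using max_add_add_le_max_add_max (a := max (P i).1 (P i).2)
    (b := max (Q i).1 (Q i).2) (c := 0) (d := 0)

lemma height_smul {t : ℝ} (ht : 0 ≤ t) (P : ι → ℝ × ℝ) : height (t • P) = t * height P := by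
  simp only [height, mul_sum, mul_max_of_nonneg _ _ ht, mul_zero, Pi.smul_apply, Prod.smul_fst,
    Prod.smul_snd, smul_eq_mul]

lemma height_le_card_mul_norm (P : ι → ℝ × ℝ) : height P ≤ Fintype.card ι * ‖P‖ := by
  rw [height, ← nsmul_eq_mul, ← card_univ, ← sum_const]
  refine sum_le_sum fun i _ => max_le (max_le ?_ ?_) (norm_nonneg P)
  · exact (le_abs_self _).trans ((norm_fst_le (P i)).trans (norm_le_pi_norm P i))
  · exact (le_abs_self _).trans ((norm_snd_le (P i)).trans (norm_le_pi_norm P i))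

lemma abs_le_sum_of_le_of_sum_nonneg {f g : ι → ℝ} (hf : 0 ≤ ∑ i, f i) (hg : ∀ i, 0 ≤ g i)
    (hfg : ∀ i, f i ≤ g i) (i : ι) : |f i| ≤ ∑ j, g j := by
  classical
  rw [abs_le]
  constructor
  · have h_rest : ∑ j ∈ univ.erase i, f j ≤ ∑ j, g j :=
      (sum_le_sum fun j _ => hfg j).trans
        (sum_le_sum_of_subset_of_nonneg (erase_subset i univ) fun j _ _ => hg j)
    rw [← add_sum_erase univ f (mem_univ i)] at hf
    linarith
  · exact (hfg i).trans (single_le_sum (fun j _ => hg j) (mem_univ i))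

lemma norm_le_height {P : ι → ℝ × ℝ} (h_fst : 0 ≤ ∑ i, (P i).1) (h_snd : 0 ≤ ∑ i, (P i).2) :
    ‖P‖ ≤ height P := by
  have h_nonneg (i : ι) : 0 ≤ max (max (P i).1 (P i).2) 0 := le_max_right _ _
  refine (pi_norm_le_iff_of_nonneg (sum_nonneg fun i _ => h_nonneg i)).mpr fun i => max_le ?_ ?_
  · exact abs_le_sum_of_le_of_sum_nonneg h_fst h_nonneg
      (fun j => (le_max_left _ _).trans (le_max_left _ _)) i
  · exact abs_le_sum_of_le_of_sum_nonneg h_snd h_nonneg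
      (fun j => (le_max_right _ _).trans (le_max_left _ _)) i

lemma log_max {a b : ℝ} (ha : 0 < a) (hb : 0 < b) : log (max a b) = max (log a) (log b) :=
  strictMonoOn_log.monotoneOn.map_max ha hb

lemma height_logAbs [Nontrivial R] (v : ι → AbsoluteValue R ℝ) (s : Rˣ × Rˣ) :
    height (logAbs v s) = ∑ i, log (localHeight (v i) s.1 s.2) := by
  have h_pos (i : ι) (z : Rˣ) : 0 < v i z := (v i).pos z.ne_zero
  refine sum_congr rfl fun i _ => ?_
  rw [localHeight, log_max (lt_max_of_lt_left (h_pos i s.1)) one_pos,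
    log_max (h_pos i s.1) (h_pos i s.2), log_one, logAbs]

lemma sum_log_abv_nonneg {v : ι → AbsoluteValue R ℝ} {r : R} (hr : r ≠ 0)
    (h_prod : 1 ≤ ∏ i, v i r) : 0 ≤ ∑ i, log (v i r) := by
  rw [← log_prod fun i _ => (v i).ne_zero hr]
  exact log_nonneg h_prod

lemma norm_logAbs_le_height [Nontrivial R] {v : ι → AbsoluteValue R ℝ}
    (h_prod : ∀ r ≠ 0, 1 ≤ ∏ i, v i r) (s : Rˣ × Rˣ) : ‖logAbs v s‖ ≤ height (logAbs v s) :=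
  norm_le_height (sum_log_abv_nonneg s.1.ne_zero (h_prod _ s.1.ne_zero))
    (sum_log_abv_nonneg s.2.ne_zero (h_prod _ s.2.ne_zero))

/-- The hypothesis of Cramer's rule is that `(s.1 ^ (2 * N), s.2 ^ (2 * N))` lies on the line with
coefficients `s' / s ^ (2 * N)`. -/
lemma nsmul_height_logAbs_le [CharZero R] {v : ι → AbsoluteValue R ℝ}
    (h_prod : ∀ r ≠ 0, 1 ≤ ∏ i, v i r) {s s' : Rˣ × Rˣ} (hs : (s.1 : R) + s.2 = 1)
    (hs' : (s'.1 : R) + s'.2 = 1) {N : ℕ} (hN : 1 ≤ N) :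
    N * height (logAbs v s) ≤ height (logAbs v s' - ((2 * N : ℕ) : ℝ) • logAbs v s) +
      N * (Fintype.card ι * log 128) := by
  set q := s' / s ^ (2 * N) with hq
  have h_line : (q.1 : R) * s.1 ^ (2 * N) + q.2 * s.2 ^ (2 * N) = 1 := by
    rw [← hs', ← Units.val_pow_eq_pow_val, ← Units.val_pow_eq_pow_val, ← Units.val_mul,
      ← Units.val_mul, ← Prod.pow_fst, ← Prod.pow_snd, ← Prod.fst_mul, ← Prod.snd_mul, hq,
      div_mul_cancel]
  obtain ⟨A, B, C, h_triple, h_ne⟩ := exists_isPadeTriple_mul_sub_mul_ne_zero hN hs q.1 q.2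
  have localHeight_pos (i : ι) (x y : R) : 0 < localHeight (v i) x y :=
    zero_lt_one.trans_le (one_le_localHeight _ _ _)
  have h_local (i : ι) : log (v i (q.1 * B - q.2 * A)) + N * log (localHeight (v i) s.1 s.2) ≤
      N * log 128 + log (localHeight (v i) q.1 q.2) := by
    rw [← log_pow, ← log_pow,
      ← log_mul ((v i).ne_zero h_ne) (pow_pos (localHeight_pos i _ _) N).ne',
      ← log_mul (by positivity) (localHeight_pos i _ _).ne']
    exact log_le_log (mul_pos ((v i).pos h_ne) (pow_pos (localHeight_pos i _ _) N))
      (h_triple.abv_mul_localHeight_pow_le hN (v i) h_line)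
  have h_sum := sum_le_sum fun i (_ : i ∈ univ) => h_local i
  rw [sum_add_distrib, sum_add_distrib, ← mul_sum, ← height_logAbs, ← height_logAbs, sum_const,
    card_univ, nsmul_eq_mul, hq, logAbs_div_pow] at h_sum
  linarith [sum_log_abv_nonneg h_ne (h_prod _ h_ne)]

end Height

section Gap

variable {E : Type*} [NormedAddCommGroup E] [NormedSpace ℝ E] {h : E → ℝ} {c d : ℝ}

lemma lt_mul_of_norm_direction_sub_le (h_add : ∀ P Q, h (P + Q) ≤ h P + h Q)
    (h_smul : ∀ t : ℝ, 0 ≤ t → ∀ P, h (t • P) = t * h P) (h_le : ∀ P, h P ≤ d * ‖P‖) {P Q : E}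
    (hP : 0 < h P) (hcP : 2 * c ≤ h P)
    (h_gap : ∀ N : ℕ, 1 ≤ N → N * h P ≤ h (Q - ((2 * N : ℕ) : ℝ) • P) + N * c)
    (h_direction : d * ‖(h Q)⁻¹ • Q - (h P)⁻¹ • P‖ ≤ 1 / 8) : h Q < 20 * h P := by
  by_contra! h_large
  have hQ : 0 < h Q := by linarith
  set t := h Q / h P with ht
  set N := ⌊t / 2⌋₊
  have ht_mul : t * h P = h Q := div_mul_cancel₀ _ hP.ne'
  have ht_large : 20 ≤ t := (le_div_iff₀ hP).mpr h_large
  have hN_le : N ≤ t / 2 := Nat.floor_le (by linarith)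
  have lt_hN : t / 2 < N + 1 := Nat.lt_floor_add_one _
  have h_decomposition : Q - ((2 * N : ℕ) : ℝ) • P =
      (t - 2 * N) • P + h Q • ((h Q)⁻¹ • Q - (h P)⁻¹ • P) := by
    rw [smul_sub, smul_inv_smul₀ hQ.ne', smul_smul, ← div_eq_mul_inv, ← ht, sub_smul]
    push_cast
    abel
  have h_near : h (Q - ((2 * N : ℕ) : ℝ) • P) ≤ (t - 2 * N) * h P + h Q * (1 / 8) := by
    rw [h_decomposition]
    refine (h_add _ _).trans ?_
    rw [h_smul _ (by linarith), h_smul _ hQ.le]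
    gcongr
    exact (h_le _).trans h_direction
  have h_gap := h_gap N (by exact_mod_cast (by linarith : (0 : ℝ) < N))
  nlinarith

/-- A sequence in `Λ` along which `h` is unbounded would have two members of nearly the same
direction and of very different size, against `lt_mul_of_norm_direction_sub_le`. -/
lemma bddAbove_image_of_gap [ProperSpace E] (h_add : ∀ P Q, h (P + Q) ≤ h P + h Q)
    (h_smul : ∀ t : ℝ, 0 ≤ t → ∀ P, h (t • P) = t * h P) (h_le : ∀ P, h P ≤ d * ‖P‖) {Λ : Set E}
    (h_norm : ∀ P ∈ Λ, ‖P‖ ≤ h P)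
    (h_gap : ∀ P ∈ Λ, ∀ Q ∈ Λ, ∀ N : ℕ, 1 ≤ N →
      N * h P ≤ h (Q - ((2 * N : ℕ) : ℝ) • P) + N * c) :
    BddAbove (h '' Λ) := by
  by_contra h_unbounded
  simp only [not_bddAbove_iff, Set.exists_mem_image] at h_unbounded
  choose x hx_mem lt_hx using fun n : ℕ => h_unbounded n
  have hx_pos (n : ℕ) : 0 < h (x n) := n.cast_nonneg.trans_lt (lt_hx n)
  have direction_mem (n : ℕ) : (h (x n))⁻¹ • x n ∈ Metric.closedBall (0 : E) 1 := by
    rw [mem_closedBall_zero_iff, norm_smul, norm_inv, Real.norm_of_nonneg (hx_pos n).le]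
    exact inv_mul_le_one_of_le₀ (h_norm _ (hx_mem n)) (hx_pos n).le
  obtain ⟨_, -, φ, hφ, h_tendsto⟩ :=
    (isCompact_closedBall (0 : E) 1).tendsto_subseq direction_mem
  obtain ⟨ε, hε, hdε⟩ := exists_pos_mul_lt (by norm_num : (0 : ℝ) < 1 / 8) |d|
  obtain ⟨n₀, h_close⟩ := Metric.cauchySeq_iff.mp h_tendsto.cauchySeq ε hε
  obtain ⟨n₁, hn₁⟩ := exists_nat_ge (2 * c)
  have lt_subseq {M : ℝ} {n : ℕ} (hM : M ≤ n) : M < h (x (φ n)) :=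
    (hM.trans (mod_cast hφ.le_apply)).trans_lt (lt_hx _)
  set m := max n₀ n₁
  obtain ⟨n₂, hn₂⟩ := exists_nat_ge (20 * h (x (φ m)))
  set n := max n₀ n₂
  have h_direction : d * ‖(h (x (φ n)))⁻¹ • x (φ n) - (h (x (φ m)))⁻¹ • x (φ m)‖ ≤ 1 / 8 :=
    calc d * ‖(h (x (φ n)))⁻¹ • x (φ n) - (h (x (φ m)))⁻¹ • x (φ m)‖
        ≤ |d| * ε := by
          rw [← dist_eq_norm]
          gcongr
          · exact le_abs_self d
          · exact (h_close n (le_max_left _ _) m (le_max_left _ _)).le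
      _ ≤ 1 / 8 := hdε.le
  have h_lt := lt_mul_of_norm_direction_sub_le h_add h_smul h_le (hx_pos (φ m))
    (lt_subseq (hn₁.trans (mod_cast le_max_right _ _))).le
    (h_gap _ (hx_mem _) _ (hx_mem _)) h_direction
  exact h_lt.not_gt (lt_subseq (hn₂.trans (mod_cast le_max_right _ _)))

end Gap

theorem finite_units_add_eq_one {R ι : Type*} [CommRing R] [CharZero R] [Fintype ι]
    (v : ι → AbsoluteValue R ℝ) (h_prod : ∀ r ≠ 0, 1 ≤ ∏ i, v i r)
    (h_northcott : ∀ B : ℝ, {r : R | ∀ i, v i r ≤ B}.Finite) :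
    {s : Rˣ × Rˣ | (s.1 : R) + s.2 = 1}.Finite := by
  obtain ⟨B, hB⟩ := bddAbove_image_of_gap (Λ := logAbs v '' {s | (s.1 : R) + s.2 = 1})
    height_add_le (fun t ht => height_smul ht) height_le_card_mul_norm
    (Set.forall_mem_image.mpr fun s _ => norm_logAbs_le_height h_prod s)
    (Set.forall_mem_image.mpr fun s hs => Set.forall_mem_image.mpr fun s' hs' N hN =>
      nsmul_height_logAbs_le h_prod hs hs' hN)
  refine Set.Finite.of_finite_image (f := fun s => (s.1 : R))
    ((h_northcott (Real.exp B)).subset (Set.image_subset_iff.mpr fun s hs i => ?_))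
    fun s hs s' hs' h_eq => ?_
  · have h_log : Real.log (v i s.1) ≤ B :=
      calc Real.log (v i s.1)
          ≤ ‖logAbs v s‖ :=
            (le_abs_self _).trans ((norm_fst_le (logAbs v s i)).trans (norm_le_pi_norm _ i))
        _ ≤ height (logAbs v s) := norm_logAbs_le_height h_prod s
        _ ≤ B := hB (Set.mem_image_of_mem _ (Set.mem_image_of_mem _ hs))
    exact (Real.log_le_iff_le_exp ((v i).pos s.1.ne_zero)).mp h_log
  · refine Prod.ext (Units.ext h_eq) (Units.ext (add_left_cancel (a := (s.1 : R)) ?_))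
    exact hs.trans (hs'.symm.trans (congrArg (· + (s'.2 : R)) h_eq.symm))

section NumberField

open Finset Function

lemma finprod_le_prod_of_le_one {α : Type*} {f : α → ℝ} (hf : f.HasFiniteMulSupport)
    (s : Finset α) (h_nonneg : ∀ a, 0 ≤ f a) (h_le : ∀ a ∉ s, f a ≤ 1) :
    ∏ᶠ a, f a ≤ ∏ a ∈ s, f a := by
  classical
  have h_finite : (mulSupport f).Finite := hf
  rw [finprod_eq_prod_of_mulSupport_subset (s := h_finite.toFinset ∪ s) f (by simp),
    ← prod_sdiff (subset_union_right (s₁ := h_finite.toFinset) (s₂ := s))]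
  exact mul_le_of_le_one_left (prod_nonneg fun a _ => h_nonneg a)
    (prod_le_one (fun a _ => h_nonneg a) fun a ha => h_le a (mem_sdiff.mp ha).2)

variable {k : Type*} [Field k] [NumberField k]

lemma finitePlace_mk_le_one_iff (v : HeightOneSpectrum (𝓞 k)) (x : k) :
    FinitePlace.mk v x ≤ 1 ↔ v.valuation k x ≤ 1 := by
  rw [FinitePlace.mk_apply, FinitePlace.norm_embedding',
    ← WithZeroMulInt.toNNReal_le_one_iff (NumberField.HeightOneSpectrum.one_lt_absNorm_nnreal v)]
  norm_cast

variable {S : Finset (HeightOneSpectrum (𝓞 k))}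

lemma finprod_finitePlace_le_prod {f : FinitePlace k → ℝ} (hf : f.HasFiniteMulSupport)
    (h_nonneg : ∀ w, 0 ≤ f w) (h_le : ∀ v ∉ S, f (FinitePlace.mk v) ≤ 1) :
    ∏ᶠ w, f w ≤ ∏ v ∈ S, f (FinitePlace.mk v) := by
  rw [← finprod_comp_equiv FinitePlace.equivHeightOneSpectrum.symm]
  exact finprod_le_prod_of_le_one (hf.fun_comp_of_injective (Equiv.injective _)) S
    (fun _ => h_nonneg _) h_le

variable (S) in
/-- The absolute values on the `S`-integers given by the infinite places, each repeated according
to its multiplicity, and by the places in `S`. -/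
noncomputable def sIntegerAbv (i : (Σ w : InfinitePlace k, Fin w.mult) ⊕ S) :
    AbsoluteValue ((S : Set (HeightOneSpectrum (𝓞 k))).integer k) ℝ :=
  (Sum.elim (fun w => w.1.1) (fun v => (FinitePlace.mk v.1).1) i : AbsoluteValue k ℝ).comp
    (Subring.subtype_injective ((S : Set (HeightOneSpectrum (𝓞 k))).integer k).toSubring)

lemma prod_sIntegerAbv (φ : ℝ → ℝ) (r : (S : Set (HeightOneSpectrum (𝓞 k))).integer k) :
    ∏ i, φ (sIntegerAbv S i r) =
      (∏ w : InfinitePlace k, φ (w r) ^ w.mult) * ∏ v ∈ S, φ (FinitePlace.mk v r) := by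
  rw [Fintype.prod_sum_type, Fintype.prod_sigma, ← prod_coe_sort S]
  congr 1
  exact prod_congr rfl fun w _ => Fin.prod_const w.mult (φ (w r))

lemma one_le_prod_sIntegerAbv {r : (S : Set (HeightOneSpectrum (𝓞 k))).integer k} (hr : r ≠ 0) :
    1 ≤ ∏ i, sIntegerAbv S i r := by
  have hr' : (r : k) ≠ 0 := Subtype.coe_ne_coe.mpr hr
  calc 1 = (∏ w : InfinitePlace k, w r ^ w.mult) * ∏ᶠ w : FinitePlace k, w r :=
        (prod_abs_eq_one hr').symm
    _ ≤ (∏ w : InfinitePlace k, w r ^ w.mult) * ∏ v ∈ S, FinitePlace.mk v r := by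
        gcongr
        exact finprod_finitePlace_le_prod (FinitePlace.hasFiniteMulSupport hr')
          (fun w => apply_nonneg w _) fun v hv => (finitePlace_mk_le_one_iff v r).mpr (r.2 v hv)
    _ = ∏ i, sIntegerAbv S i r := (prod_sIntegerAbv id r).symm

lemma hasFiniteMulSupport_max_one (x : k) :
    (fun w : FinitePlace k => max (w x) 1).HasFiniteMulSupport := by
  rcases eq_or_ne x 0 with rfl | hx
  · simp [HasFiniteMulSupport]
  · exact (FinitePlace.hasFiniteMulSupport hx).max hasFiniteMulSupport_fun_one

lemma mulHeight₁_le_prod_sIntegerAbv (r : (S : Set (HeightOneSpectrum (𝓞 k))).integer k) :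
    Height.mulHeight₁ (r : k) ≤ ∏ i, max (sIntegerAbv S i r) 1 := by
  rw [mulHeight₁_eq, prod_sIntegerAbv (max · 1)]
  gcongr
  exact finprod_finitePlace_le_prod (hasFiniteMulSupport_max_one _)
    (fun w => le_max_of_le_right zero_le_one)
    fun v hv => max_le ((finitePlace_mk_le_one_iff v r).mpr (r.2 v hv)) le_rfl

lemma finite_setOf_sIntegerAbv_le (B : ℝ) :
    {r : (S : Set (HeightOneSpectrum (𝓞 k))).integer k | ∀ i, sIntegerAbv S i r ≤ B}.Finite := by
  refine Set.Finite.of_finite_image (f := Subtype.val)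
    ((finite_setOfPred_mulHeight₁_le k (∏ _i : (Σ w : InfinitePlace k, Fin w.mult) ⊕ S,
      max B 1)).subset (Set.image_subset_iff.mpr fun r hr => ?_)) Subtype.val_injective.injOn
  refine (mulHeight₁_le_prod_sIntegerAbv r).trans (prod_le_prod ?_ ?_)
  · exact fun i _ => le_max_of_le_right zero_le_one
  · exact fun i _ => max_le_max_right 1 (hr i)

variable (S) in
theorem finite_unit_add_eq_one :
    {p : kˣ × kˣ | p.1 ∈ (S : Set (HeightOneSpectrum (𝓞 k))).unit k ∧
      p.2 ∈ (S : Set (HeightOneSpectrum (𝓞 k))).unit k ∧ (p.1 : k) + p.2 = 1}.Finite := by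
  refine ((finite_units_add_eq_one (sIntegerAbv S) (fun r => one_le_prod_sIntegerAbv)
    finite_setOf_sIntegerAbv_le).image (Prod.map (Units.map (algebraMap _ k).toMonoidHom)
      (Units.map (algebraMap _ k).toMonoidHom))).subset ?_
  rintro ⟨u, w⟩ ⟨hu, hw, h_add⟩
  exact ⟨(Set.unitEquivUnitsInteger _ k ⟨u, hu⟩, Set.unitEquivUnitsInteger _ k ⟨w, hw⟩),
    Subtype.ext h_add, Prod.ext (Units.ext rfl) (Units.ext rfl)⟩

end NumberField

section Unit

variable {R K : Type*} [CommRing R] [IsDedekindDomain R] [Field K] [Algebra R K]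
  [IsFractionRing R K]

lemma unit_mono {S T : Set (HeightOneSpectrum R)} (hST : S ⊆ T) : S.unit K ≤ T.unit K :=
  fun _ hu v hv => hu v fun hvS => hv (hST hvS)

lemma exists_finset_mem_unit (z : Kˣ) :
    ∃ T : Finset (HeightOneSpectrum R), z ∈ (T : Set (HeightOneSpectrum R)).unit K := by
  classical
  have h_poles (x : K) := HeightOneSpectrum.Support.finite R x
  refine ⟨(h_poles z).toFinset ∪ (h_poles (z⁻¹ : Kˣ)).toFinset, fun v hv => ?_⟩
  simp only [Finset.coe_union, Set.Finite.coe_toFinset, Set.mem_union, not_or,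
    HeightOneSpectrum.Support, Set.mem_ofPred_eq, not_lt, Units.val_inv_eq_inv_val, map_inv₀] at hv
  exact le_antisymm hv.1 ((inv_le_one₀ ((Valuation.pos_iff _).mpr z.ne_zero)).mp hv.2)

end Unit

end SUnitEquation

/-- Siegel–Mahler `S`-unit equation theorem: for nonzero `a, b, c ∈ k`,
the set of pairs `(u, v) ∈ O_{k,S}^* × O_{k,S}^*` with `au + bv = c` is finite. -/
theorem stmt_18 {k : Type*} [Field k] [NumberField k]
    (S : Finset (HeightOneSpectrum (𝓞 k)))
    (a b c : k) (ha : a ≠ 0) (hb : b ≠ 0) (hc : c ≠ 0) :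
    {p : kˣ × kˣ | p.1 ∈ (S : Set (HeightOneSpectrum (𝓞 k))).unit k ∧
      p.2 ∈ (S : Set (HeightOneSpectrum (𝓞 k))).unit k ∧
      a * p.1 + b * p.2 = c}.Finite := by
  classical
  set α : kˣ := Units.mk0 (a / c) (div_ne_zero ha hc)
  set β : kˣ := Units.mk0 (b / c) (div_ne_zero hb hc)
  obtain ⟨T₁, hT₁⟩ := SUnitEquation.exists_finset_mem_unit (R := 𝓞 k) α
  obtain ⟨T₂, hT₂⟩ := SUnitEquation.exists_finset_mem_unit (R := 𝓞 k) β
  have mem_unit_union {T : Finset (HeightOneSpectrum (𝓞 k))} (hT : T ⊆ S ∪ T₁ ∪ T₂) {z : kˣ}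
      (hz : z ∈ (T : Set (HeightOneSpectrum (𝓞 k))).unit k) :
      z ∈ ((S ∪ T₁ ∪ T₂ : Finset _) : Set (HeightOneSpectrum (𝓞 k))).unit k :=
    SUnitEquation.unit_mono (Finset.coe_subset.mpr hT) hz
  refine ((SUnitEquation.finite_unit_add_eq_one (S ∪ T₁ ∪ T₂)).preimage
    (mul_right_injective (α, β)).injOn).subset ?_
  rintro ⟨u, w⟩ ⟨hu, hw, h_eq⟩
  refine ⟨mul_mem (mem_unit_union (by grind) hT₁) (mem_unit_union (by grind) hu),
    mul_mem (mem_unit_union (by grind) hT₂) (mem_unit_union (by grind) hw), ?_⟩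
  calc a / c * (u : k) + b / c * (w : k) = (a * u + b * w) / c := by ring
    _ = 1 := by rw [h_eq, div_self hc]
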